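/- Let A be the 2×4 integer matrix with columns a₁ = (0,1), a₂ = (1,2), a₃ = (2,0), a₄ = (3,0), and let I_A ⊆ ℂ[∂₁,∂₂,∂₃,∂₄] be its toric ideal. Then neither ℂ[∂₁,…,∂₄]/I_A nor ℂ[∂₁,…,∂₄]/in(I_A) is Cohen–Macaulay, where in(I_A) is the initial ideal of I_A with respect to total degree. -/

import Mathlib

/-! Both failures of the Cohen–Macaulay property are detected by exhibiting one explicit monomial.

*The toric ring.* `ℂ[∂]/I_A` is the semigroup ring of `S = ℕA = ℕ² \ {(1,0), (1,1)}`. It is a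
domain, and the chain `0 < (∂₂,∂₃,∂₄) < m = (∂₁,∂₂,∂₃,∂₄)` shows that its localization at `m` has
dimension at least two. The element `y = ∂₁∂₄` is the monomial of degree `(3,1) = (1,1) + a₃`.
Since `(1,1)` is a hole of `S` that moves into `S` when any generator is added, `m y ⊆ (∂₃)`
although `y ∉ (∂₃)`, even after localizing at `m`. In a local ring of depth at least two this is
impossible for a nonzerodivisor in place of `∂₃` (`dvd_of_ext`), so the depth at `m` is at most one.

*The initial ideal.* Every nonzero element of `I_A` contains, with each exponent `u`, another
exponent of the same multidegree `A u` (`exists_ne_of_mem_toricIdeal`). Hence if `u` is the unique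
exponent of least total degree in its fibre, `∂^u` occurs in no initial form, and therefore in no
element of `in(I_A)` (`coeff_eq_zero_of_mem_initialIdeal`). From this one reads off that
`in(I_A) ⊆ (∂₃,∂₄)` and that the annihilator of `∂₁³∂₃` modulo `in(I_A)` is the prime
`(∂₁,∂₃,∂₄)`. So `(∂₁,∂₃,∂₄)` is an embedded prime, and the localization there has depth zero but
positive dimension.
-/

open MvPolynomial CategoryTheory

noncomputable section

/-- The set of columns of an integer matrix. -/
def cols {d n : ℕ} (A : Matrix (Fin d) (Fin n) ℤ) : Set (Fin d → ℤ) :=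
  Set.range fun j i => A i j

/-- The affine semigroup `ℕA` generated by the columns of `A` is pointed. -/
def IsPointed {d n : ℕ} (A : Matrix (Fin d) (Fin n) ℤ) : Prop :=
  ∀ v ∈ AddSubmonoid.closure (cols A),
    -v ∈ AddSubmonoid.closure (cols A) → v = 0

/-- The toric ideal `I_A ⊆ ℂ[∂₁,…,∂ₙ]`, generated by the binomials
`∂^u - ∂^v` with `Au = Av`. -/
def toricIdeal {d n : ℕ} (A : Matrix (Fin d) (Fin n) ℤ) :
    Ideal (MvPolynomial (Fin n) ℂ) :=
  Ideal.span { f | ∃ u v : Fin n →₀ ℕ,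
    A.mulVec (fun j => (u j : ℤ)) = A.mulVec (fun j => (v j : ℤ)) ∧
    f = monomial u 1 - monomial v 1 }

/-- The `L`-weight of an exponent vector. -/
def wt {n : ℕ} (L : Fin n → ℚ) (u : Fin n →₀ ℕ) : ℚ := ∑ j, L j * (u j : ℚ)

/-- The `L`-initial form of a polynomial: the sum of its terms of maximal `L`-weight. -/
def initialForm {n : ℕ} (L : Fin n → ℚ) (f : MvPolynomial (Fin n) ℂ) :
    MvPolynomial (Fin n) ℂ :=
  ∑ u ∈ f.support.filter fun u => ∀ v ∈ f.support, wt L v ≤ wt L u,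
    monomial u (f.coeff u)

/-- The `L`-initial ideal `in_L(I)` of an ideal `I ⊆ ℂ[∂₁,…,∂ₙ]`. -/
def initialIdeal {n : ℕ} (L : Fin n → ℚ) (I : Ideal (MvPolynomial (Fin n) ℂ)) :
    Ideal (MvPolynomial (Fin n) ℂ) :=
  Ideal.span { g | ∃ f ∈ I, f ≠ 0 ∧ g = initialForm L f }

/-- The depth of a Noetherian local ring `R`, i.e. `inf { i | Ext^i_R(R/m, R) ≠ 0 }`. -/
def ringDepth (R : Type) [CommRing R] [IsLocalRing R] : ℕ∞ :=
  sInf { i : ℕ∞ | ∃ m : ℕ, i = m ∧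
    Nontrivial (((Ext R (ModuleCat.{0} R) m).obj
        (Opposite.op (ModuleCat.of R (R ⧸ IsLocalRing.maximalIdeal R)))).obj
      (ModuleCat.of R R)) }

/-- A commutative ring `T` is Cohen–Macaulay if for every prime ideal `p`, the
localization `T_p` satisfies `depth = Krull dimension`. -/
def IsCohenMacaulayRing (T : Type) [CommRing T] : Prop :=
  ∀ (p : Ideal T) [p.IsPrime],
    (ringDepth (Localization.AtPrime p) : WithBot ℕ∞) =
      ringKrullDim (Localization.AtPrime p)

/-- The Euler operator `E_i = ∑ⱼ a_{ij} xⱼ ∂ⱼ` as an element of `ℂ[x,∂]`,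
where `x_j = X (Sum.inl j)` and `∂_j = X (Sum.inr j)`. -/
def eulerXD {d n : ℕ} (A : Matrix (Fin d) (Fin n) ℤ) (i : Fin d) :
    MvPolynomial (Fin n ⊕ Fin n) ℂ :=
  ∑ j, (A i j : MvPolynomial (Fin n ⊕ Fin n) ℂ) * X (Sum.inl j) * X (Sum.inr j)

/-- The inclusion `ℂ[∂] → K[∂]`, for `K` an algebra over `ℂ[x₁,…,xₙ]`
(in practice `K = ℂ(x₁,…,xₙ)`), sending `∂ⱼ` to `∂ⱼ`. -/
def toFracPoly (n : ℕ) (K : Type) [CommRing K] [Algebra (MvPolynomial (Fin n) ℂ) K] :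
    MvPolynomial (Fin n) ℂ →+* MvPolynomial (Fin n) K :=
  MvPolynomial.map ((algebraMap (MvPolynomial (Fin n) ℂ) K).comp (C : ℂ →+* _))

/-- The Euler operator `E_i = ∑ⱼ a_{ij} xⱼ ∂ⱼ` as an element of `K[∂]`
(in practice `K = ℂ(x₁,…,xₙ)`, and the `xⱼ` act as scalars). -/
def eulerFrac {d n : ℕ} (A : Matrix (Fin d) (Fin n) ℤ) (K : Type) [CommRing K]
    [Algebra (MvPolynomial (Fin n) ℂ) K] (i : Fin d) : MvPolynomial (Fin n) K :=
  ∑ j, C (algebraMap (MvPolynomial (Fin n) ℂ) K (X j)) *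
    (A i j : MvPolynomial (Fin n) K) * X j

/-- The extension `in_L(I_A)·ℂ[x,∂]` of the initial ideal of the toric ideal to
`ℂ[x,∂]`, where `x_j = X (Sum.inl j)` and `∂_j = X (Sum.inr j)`. -/
def grIdealXD {d n : ℕ} (A : Matrix (Fin d) (Fin n) ℤ) (L : Fin n → ℚ) :
    Ideal (MvPolynomial (Fin n ⊕ Fin n) ℂ) :=
  Ideal.map (rename (Sum.inr : Fin n → Fin n ⊕ Fin n)) (initialIdeal L (toricIdeal A))

/-- The extension `in_L(I_A)·K[∂]` of the initial ideal of the toric ideal to `K[∂]`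
(in practice `K = ℂ(x₁,…,xₙ)`). -/
def grIdealFrac {d n : ℕ} (A : Matrix (Fin d) (Fin n) ℤ) (L : Fin n → ℚ) (K : Type)
    [CommRing K] [Algebra (MvPolynomial (Fin n) ℂ) K] : Ideal (MvPolynomial (Fin n) K) :=
  Ideal.map (toFracPoly n K) (initialIdeal L (toricIdeal A))

/-! ### Depth and divisibility by a nonzerodivisor -/

section depth

variable {R : Type} [CommRing R]

/-- Vanishing of `Ext^j(M, N)`, read on a projective resolution of `M`: each `j`-cocycle with
values in `N` is a coboundary. Here `i` and `k` are the neighbours of `j`, with `i = j = 0` at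
the left end of the complex. -/
lemma ext_exact {M N : ModuleCat.{0} R} (P : ProjectiveResolution M) (i j k : ℕ)
    (hi : (ComplexShape.up ℕ).prev j = i) (hk : (ComplexShape.up ℕ).next j = k)
    (h : Subsingleton (((Ext R (ModuleCat.{0} R) j).obj (Opposite.op M)).obj N))
    (g : P.complex.X j ⟶ N) (hg : P.complex.d k j ≫ g = 0) :
    ∃ g' : P.complex.X i ⟶ N, P.complex.d j i ≫ g' = g := by
  have hz : Limits.IsZero ((P.complex.linearYonedaObj R N).homology j) :=
    (ModuleCat.isZero_of_subsingleton _).of_iso (P.isoExt j N).symm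
  rw [← HomologicalComplex.exactAt_iff_isZero_homology,
    HomologicalComplex.exactAt_iff' _ i j k hi hk, ShortComplex.moduleCat_exact_iff] at hz
  exact hz g hg

/-- Depth at least one: if `Hom(R/m, R) = 0`, then no nonzero element is killed by `m`. -/
lemma eq_zero_of_ext [IsLocalRing R]
    (h0 : Subsingleton (((Ext R (ModuleCat.{0} R) 0).obj
        (Opposite.op (ModuleCat.of R (R ⧸ IsLocalRing.maximalIdeal R)))).obj
      (ModuleCat.of R R)))
    (z : R) (hz : ∀ a ∈ IsLocalRing.maximalIdeal R, a * z = 0) : z = 0 := by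
  set M := ModuleCat.of R (R ⧸ IsLocalRing.maximalIdeal R)
  let P : ProjectiveResolution M := projectiveResolution M
  let f : M ⟶ ModuleCat.of R R := ModuleCat.ofHom
    ((IsLocalRing.maximalIdeal R).liftQ (LinearMap.toSpanSingleton R R z) (by
      intro a ha; simpa using hz a ha))
  have hf : P.π.f 0 ≫ (show ((ChainComplex.single₀ _).obj M).X 0 ⟶ _ from f) = 0 := by
    obtain ⟨g', hg'⟩ := ext_exact P 0 0 1 (by simp) (by simp) h0
      (P.π.f 0 ≫ (show ((ChainComplex.single₀ _).obj M).X 0 ⟶ _ from f)) (by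
        rw [← Category.assoc, P.complex_d_comp_π_f_zero, Limits.zero_comp])
    rw [← hg', P.complex.shape _ _ (by simp), Limits.zero_comp]
  have hf0 : (show ((ChainComplex.single₀ _).obj M).X 0 ⟶ _ from f) = 0 := by
    rwa [← cancel_epi (P.π.f 0), Limits.comp_zero]
  have : (1 : R) • z = 0 :=
    congrArg (fun φ : M ⟶ ModuleCat.of R R => φ.hom (Submodule.Quotient.mk (1 : R))) hf0
  rwa [one_smul] at this

/-- Depth at least two: if `Hom(R/m, R)` and `Ext¹(R/m, R)` vanish and `x` is a nonzerodivisor,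
then `Hom(R/m, R/xR) = 0`, that is, `m y ⊆ xR` forces `y ∈ xR`. This is the long exact sequence
of `0 → R → R → R/xR → 0`, carried out by hand on a projective resolution `P` of `R/m`: the map
`P₀ → R/xR` given by `y` lifts to `g : P₀ → R`, and `g` restricted to `P₁` is `x` times a
cocycle `h`, which is a coboundary. -/
lemma dvd_of_ext [IsLocalRing R]
    (h0 : Subsingleton (((Ext R (ModuleCat.{0} R) 0).obj
        (Opposite.op (ModuleCat.of R (R ⧸ IsLocalRing.maximalIdeal R)))).obj
      (ModuleCat.of R R)))
    (h1 : Subsingleton (((Ext R (ModuleCat.{0} R) 1).obj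
        (Opposite.op (ModuleCat.of R (R ⧸ IsLocalRing.maximalIdeal R)))).obj
      (ModuleCat.of R R)))
    (x y : R) (hx : x ∈ nonZeroDivisors R)
    (hy : ∀ a ∈ IsLocalRing.maximalIdeal R, x ∣ a * y) : x ∣ y := by
  set M := ModuleCat.of R (R ⧸ IsLocalRing.maximalIdeal R)
  let P : ProjectiveResolution M := projectiveResolution M
  let N := ModuleCat.of R (R ⧸ Ideal.span {x})
  let f : M ⟶ N := ModuleCat.ofHom
    ((IsLocalRing.maximalIdeal R).liftQ (LinearMap.toSpanSingleton R _ (Submodule.Quotient.mk y)) (by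
      intro a ha
      have := hy a ha
      rw [← Ideal.mem_span_singleton] at this
      exact (Submodule.Quotient.mk_eq_zero (Ideal.span {x})).2 this))
  let π : ModuleCat.of R R ⟶ N := ModuleCat.ofHom (Submodule.mkQ _)
  have : Epi π := (ModuleCat.epi_iff_surjective _).2 (Submodule.mkQ_surjective _)
  let f' : P.complex.X 0 ⟶ N := P.π.f 0 ≫ (show ((ChainComplex.single₀ _).obj M).X 0 ⟶ _ from f)
  have hf' : P.complex.d 1 0 ≫ f' = 0 := by
    rw [← Category.assoc, P.complex_d_comp_π_f_zero, Limits.zero_comp]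
  have := P.projective 0
  let g : P.complex.X 0 ⟶ ModuleCat.of R R := Projective.factorThru f' π
  have hg : g ≫ π = f' := Projective.factorThru_comp _ _
  -- `q` divides the elements of `xR` by `x`.
  have hxr : ∀ r : R, ∃ s, r ∈ Ideal.span {x} → x * s = r := fun r => by
    by_cases hr : r ∈ Ideal.span {x}
    · obtain ⟨s, rfl⟩ := Ideal.mem_span_singleton.1 hr
      exact ⟨s, fun _ => rfl⟩
    · exact ⟨0, fun h => absurd h hr⟩
  choose q hq using hxr
  have hmem : ∀ w : P.complex.X 1, (P.complex.d 1 0 ≫ g).hom w ∈ Ideal.span {x} := fun w => by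
    have := congrArg (fun φ => φ.hom w) (show (P.complex.d 1 0 ≫ g) ≫ π = 0 by
      rw [Category.assoc, hg, hf'])
    exact (Submodule.Quotient.mk_eq_zero (Ideal.span {x})).1 this
  have hinj : ∀ a b : R, x * a = x * b → a = b := fun a b h =>
    (mul_cancel_left_mem_nonZeroDivisors hx).1 h
  let h : P.complex.X 1 ⟶ ModuleCat.of R R := ModuleCat.ofHom
    { toFun := fun w => q ((P.complex.d 1 0 ≫ g).hom w)
      map_add' := fun a b => hinj _ _ (by
        rw [hq _ (hmem _), mul_add, hq _ (hmem _), hq _ (hmem _), map_add])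
      map_smul' := fun r a => hinj _ _ (by
        rw [hq _ (hmem _), map_smul, smul_eq_mul, smul_eq_mul, RingHom.id_apply,
          mul_left_comm, hq _ (hmem _)]) }
  have hh : ∀ w, x * h.hom w = (P.complex.d 1 0 ≫ g).hom w := fun w => hq _ (hmem w)
  have hdh : P.complex.d 2 1 ≫ h = 0 := by
    ext w
    refine hinj _ _ ?_
    have e := hh ((P.complex.d 2 1).hom w)
    have e2 := congrArg (fun φ => φ.hom w) (P.complex.d_comp_d_assoc 2 1 0 g)
    refine (e.trans e2).trans ?_
    simp
  obtain ⟨h', hh'⟩ := ext_exact P 0 1 2 (by simp) (by simp) h1 h hdh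
  have hgh : P.complex.d 1 0 ≫ (g - x • h') = 0 := by
    rw [Preadditive.comp_sub, Linear.comp_smul, hh', sub_eq_zero]
    ext w
    exact (hh w).symm
  obtain ⟨g', hg'⟩ := ext_exact P 0 0 1 (by simp) (by simp) h0 _ hgh
  -- In degree `0` the complex of cochains has no incoming differential, so `g - x • h'` is zero.
  have hgx : g = x • h' := by
    rw [← sub_eq_zero, ← hg', P.complex.shape _ _ (by simp), Limits.zero_comp]
  have hf0 : (show ((ChainComplex.single₀ _).obj M).X 0 ⟶ _ from f) = 0 := by
    rw [← cancel_epi (P.π.f 0), Limits.comp_zero]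
    change f' = 0
    rw [← hg, hgx]
    ext w
    change Submodule.Quotient.mk (x * h'.hom w) = (0 : R ⧸ Ideal.span {x})
    rw [Submodule.Quotient.mk_eq_zero]
    exact Ideal.mul_mem_right _ _ (Ideal.mem_span_singleton_self x)
  have h2 : (1 : R) • Submodule.Quotient.mk y = (0 : R ⧸ Ideal.span {x}) :=
    congrArg (fun φ : M ⟶ N => φ.hom (Submodule.Quotient.mk (1 : R))) hf0
  rwa [one_smul, Submodule.Quotient.mk_eq_zero, Ideal.mem_span_singleton] at h2

lemma subsingleton_ext_of_lt [IsLocalRing R] (i : ℕ) (h : (i : ℕ∞) < ringDepth R) :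
    Subsingleton (((Ext R (ModuleCat.{0} R) i).obj
        (Opposite.op (ModuleCat.of R (R ⧸ IsLocalRing.maximalIdeal R)))).obj
      (ModuleCat.of R R)) := by
  by_contra hn
  rw [not_subsingleton_iff_nontrivial] at hn
  exact absurd (sInf_le ⟨i, rfl, hn⟩ : ringDepth R ≤ i) (not_le.2 h)

end depth

/-! ### Criteria for a quotient ring not to be Cohen–Macaulay -/

section localCriteria

variable {R : Type} [CommRing R]

lemma isPrime_map_mk (J p : Ideal R) [p.IsPrime] (h : J ≤ p) :
    (p.map (Ideal.Quotient.mk J)).IsPrime :=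
  Ideal.map_isPrime_of_surjective Ideal.Quotient.mk_surjective (by rwa [Ideal.mk_ker])

lemma mk_mem_map_iff {J p : Ideal R} (h : J ≤ p) (a : R) :
    Ideal.Quotient.mk J a ∈ p.map (Ideal.Quotient.mk J) ↔ a ∈ p := by
  rw [← Ideal.mem_comap, Ideal.comap_map_of_surjective' _ Ideal.Quotient.mk_surjective,
    Ideal.mk_ker, sup_eq_left.2 h]

lemma map_mk_lt {J p q : Ideal R} (hJ : J ≤ p) (h : p < q) :
    p.map (Ideal.Quotient.mk J) < q.map (Ideal.Quotient.mk J) := by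
  obtain ⟨hle, a, ha, hna⟩ := SetLike.lt_iff_le_and_exists.1 h
  exact SetLike.lt_iff_le_and_exists.2 ⟨Ideal.map_mono hle, Ideal.Quotient.mk J a,
    (mk_mem_map_iff (hJ.trans hle) a).2 ha, fun h' => hna ((mk_mem_map_iff hJ a).1 h')⟩

lemma height_lt_depth {T : Type} [CommRing T] (hT : IsCohenMacaulayRing T) (p : Ideal T)
    [p.IsPrime] (i : ℕ) (h : (i : ℕ∞) < p.height) :
    (i : ℕ∞) < ringDepth (Localization.AtPrime p) := by
  have := hT p
  rw [IsLocalization.AtPrime.ringKrullDim_eq_height p (Localization.AtPrime p)] at this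
  rwa [WithBot.coe_inj.1 this]

/-- The inclusion `p y ⊆ J + (x)` in `R` passes to the localization of `R/J` at `p/J`. -/
lemma dvd_mul_of_mem_maximalIdeal (J p : Ideal R) (hJp : J ≤ p)
    [(p.map (Ideal.Quotient.mk J)).IsPrime] (x y : R)
    (hy : ∀ a ∈ p, a * y ∈ J ⊔ Ideal.span {x})
    (a : Localization.AtPrime (p.map (Ideal.Quotient.mk J)))
    (ha : a ∈ IsLocalRing.maximalIdeal (Localization.AtPrime (p.map (Ideal.Quotient.mk J)))) :
    algebraMap (R ⧸ J) _ (Ideal.Quotient.mk J x) ∣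
      a * algebraMap (R ⧸ J) _ (Ideal.Quotient.mk J y) := by
  rw [← Localization.AtPrime.map_eq_maximalIdeal] at ha
  induction ha using Submodule.span_induction with
  | mem a ha =>
    obtain ⟨t, ht, rfl⟩ := ha
    obtain ⟨b, rfl⟩ := Ideal.Quotient.mk_surjective t
    obtain ⟨j, hj, z, hz, e⟩ := Submodule.mem_sup.1 (hy b ((mk_mem_map_iff hJp b).1 ht))
    obtain ⟨c, rfl⟩ := Ideal.mem_span_singleton.1 hz
    rw [← map_mul, ← map_mul, ← e, map_add, Ideal.Quotient.eq_zero_iff_mem.2 hj, zero_add]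
    exact map_dvd _ (map_dvd _ (dvd_mul_right x c))
  | zero => simp
  | add u v _ _ hu hv => rw [add_mul]; exact dvd_add hu hv
  | smul r u _ hu => rw [smul_eq_mul, mul_assoc]; exact hu.mul_left r

/-- If `f` is killed by `p` modulo `J` and does not vanish in the localization of `R/J` at `p`,
then that localization has depth zero, while its dimension is positive as soon as `p` lies
strictly above another prime `q ⊇ J`. -/
lemma not_isCohenMacaulayRing_of_embedded (J q p : Ideal R) [q.IsPrime] [p.IsPrime] (hJ : J ≤ q)
    (hqp : q < p) (f : R) (hf : ∀ s ∉ p, s * f ∉ J) (hpf : ∀ a ∈ p, a * f ∈ J) :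
    ¬ IsCohenMacaulayRing (R ⧸ J) := by
  intro hCM
  have hJp := hJ.trans hqp.le
  have := isPrime_map_mk J p hJp
  have := isPrime_map_mk J q hJ
  set p' := p.map (Ideal.Quotient.mk J)
  have hht : ((0 : ℕ) : ℕ∞) < p'.height := by
    have := Ideal.height_add_one_le_of_lt_of_isPrime (map_mk_lt hJ hqp)
    exact lt_of_lt_of_le (by simp) this
  have h0 := subsingleton_ext_of_lt 0 (height_lt_depth hCM p' 0 hht)
  -- The case `x = 0` of `dvd_mul_of_mem_maximalIdeal` gives `m f = 0` in the localization.
  have key := eq_zero_of_ext h0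
    (algebraMap (R ⧸ J) (Localization.AtPrime p') (Ideal.Quotient.mk J f)) (fun a ha => by
      have := dvd_mul_of_mem_maximalIdeal J p hJp 0 f
        (fun a ha => Ideal.mem_sup_left (hpf a ha)) a ha
      rwa [map_zero, map_zero, zero_dvd_iff] at this)
  rw [IsLocalization.map_eq_zero_iff p'.primeCompl] at key
  obtain ⟨⟨s, hs⟩, hsf⟩ := key
  obtain ⟨s, rfl⟩ := Ideal.Quotient.mk_surjective s
  refine hf s (fun h => hs ((mk_mem_map_iff hJp s).2 h)) ?_
  rw [← Ideal.Quotient.eq_zero_iff_mem, map_mul]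
  exact hsf

/-- If `R/J` is a domain, `m/J` has height at least two, and `y` is a socle element of `R/(J + (x))`
at `m` for some `x` nonzero in `R/J`, then the localization of `R/J` at `m` has depth at most one. -/
lemma not_isCohenMacaulayRing_of_socle (J q m : Ideal R) [J.IsPrime] [q.IsPrime] [m.IsPrime]
    (hJ : J < q) (hqm : q < m) (x y : R) (hx : x ∉ J)
    (hy : ∀ a ∈ m, a * y ∈ J ⊔ Ideal.span {x}) (hxy : ∀ s ∉ m, s * y ∉ J ⊔ Ideal.span {x}) :
    ¬ IsCohenMacaulayRing (R ⧸ J) := by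
  intro hCM
  have hJm := hJ.le.trans hqm.le
  have := isPrime_map_mk J m hJm
  have := isPrime_map_mk J q hJ.le
  have := isPrime_map_mk J J le_rfl
  set m' := m.map (Ideal.Quotient.mk J) with hm'
  have hht : ((1 : ℕ) : ℕ∞) < m'.height := by
    have h1 := Ideal.height_add_one_le_of_lt_of_isPrime (map_mk_lt hJ.le hqm)
    have h2 := Ideal.height_add_one_le_of_lt_of_isPrime (map_mk_lt le_rfl hJ)
    have h3 : (1 : ℕ∞) + 1 ≤ m'.height := le_trans (by gcongr; exact le_trans le_add_self h2) h1
    exact lt_of_lt_of_le (by norm_num) h3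
  have h1 := subsingleton_ext_of_lt 1 (height_lt_depth hCM m' 1 hht)
  have h0 := subsingleton_ext_of_lt 0 (height_lt_depth hCM m' 0 (lt_trans (by simp) hht))
  have hx0 : Ideal.Quotient.mk J x ≠ 0 := fun h => hx (Ideal.Quotient.eq_zero_iff_mem.1 h)
  have key := dvd_of_ext h0 h1 (algebraMap (R ⧸ J) _ (Ideal.Quotient.mk J x))
    (algebraMap (R ⧸ J) _ (Ideal.Quotient.mk J y))
    (IsLocalization.map_nonZeroDivisors_le m'.primeCompl _
      (Submonoid.mem_map_of_mem _ (mem_nonZeroDivisors_of_ne_zero hx0)))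
    (dvd_mul_of_mem_maximalIdeal J m hJm x y hy)
  -- Clearing denominators in `y = x c` gives `s * t ∉ m` with `s t y ∈ J + (x)`.
  obtain ⟨c, hc⟩ := key
  obtain ⟨⟨r, s⟩, rfl⟩ := IsLocalization.mk'_surjective m'.primeCompl c
  rw [← IsLocalization.mk'_one (M := m'.primeCompl) _ (Ideal.Quotient.mk J x),
    ← IsLocalization.mk'_mul, IsLocalization.eq_mk'_iff_mul_eq, ← map_mul] at hc
  obtain ⟨⟨t, ht⟩, e⟩ := (IsLocalization.eq_iff_exists m'.primeCompl _).1 hc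
  obtain ⟨s, hs⟩ := s
  obtain ⟨s, rfl⟩ := Ideal.Quotient.mk_surjective s
  obtain ⟨t, rfl⟩ := Ideal.Quotient.mk_surjective t
  obtain ⟨r, rfl⟩ := Ideal.Quotient.mk_surjective r
  refine hxy (t * s) (fun h => ?_) ?_
  · rcases Ideal.IsPrime.mem_or_mem inferInstance h with h | h
    · exact ht ((mk_mem_map_iff hJm t).2 h)
    · exact hs ((mk_mem_map_iff hJm s).2 h)
  · have e' : Ideal.Quotient.mk J (t * s * y) = Ideal.Quotient.mk J (x * (t * r)) := by
      simp only [map_mul]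
      simp only [one_mul] at e
      linear_combination e
    rw [Ideal.Quotient.mk_eq_mk_iff_sub_mem] at e'
    rw [← sub_add_cancel (t * s * y) (x * (t * r))]
    exact Ideal.add_mem _ (Ideal.mem_sup_left e')
      (Ideal.mem_sup_right (Ideal.mul_mem_right _ _ (Ideal.mem_span_singleton_self x)))

end localCriteria

/-! ### The toric ideal as the kernel of a monomial map -/

section toric

/-- The matrix with columns `(0,1)`, `(1,2)`, `(2,0)`, `(3,0)`. -/
abbrev matA : Matrix (Fin 2) (Fin 4) ℤ := !![0, 1, 2, 3; 1, 2, 0, 0]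

/-- The multidegree `u ↦ A u`, as an additive homomorphism `ℕ⁴ → ℤ²`. -/
def degA : (Fin 4 →₀ ℕ) →+ (Fin 2 → ℤ) where
  toFun u := matA.mulVec fun j => (u j : ℤ)
  map_zero' := by simp
  map_add' u v := by
    rw [← Matrix.mulVec_add]; congr 1

lemma degA_eq_iff (u v : Fin 4 →₀ ℕ) : degA u = degA v ↔
    u 1 + 2 * u 2 + 3 * u 3 = v 1 + 2 * v 2 + 3 * v 3 ∧ u 0 + 2 * u 1 = v 0 + 2 * v 1 := by
  have h : ∀ w : Fin 4 →₀ ℕ, degA w =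
      ![((w 1 + 2 * w 2 + 3 * w 3 : ℕ) : ℤ), ((w 0 + 2 * w 1 : ℕ) : ℤ)] := by
    intro w
    ext i
    fin_cases i <;> simp [degA, dotProduct, Fin.sum_univ_four]
  rw [h, h]
  constructor
  · intro e
    have e0 := congrFun e 0
    have e1 := congrFun e 1
    simp only [Matrix.cons_val_zero, Matrix.cons_val_one] at e0 e1
    exact ⟨by exact_mod_cast e0, by exact_mod_cast e1⟩
  · rintro ⟨e1, e2⟩
    rw [e1, e2]

/-- The monomial map `∂^u ↦ t^{Au}` from `ℂ[∂]` to `ℂ[ℤ²]`, the ring of Laurent polynomials. -/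
def toricMap : MvPolynomial (Fin 4) ℂ →+* AddMonoidAlgebra ℂ (Fin 2 → ℤ) :=
  AddMonoidAlgebra.mapDomainRingHom ℂ degA

lemma toricMap_monomial (u : Fin 4 →₀ ℕ) (c : ℂ) :
    toricMap (monomial u c) = AddMonoidAlgebra.single (degA u) c :=
  AddMonoidAlgebra.mapDomain_single

/-- Replacing each exponent by a chosen representative `σ` of its fibre changes a polynomial only
by a combination of the binomials `∂^u - ∂^v`, and annihilates the kernel. -/
lemma ker_toricMap : RingHom.ker toricMap = toricIdeal matA := by
  apply le_antisymm
  · intro F hF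
    -- `σ` picks one exponent in each nonempty fibre of `u ↦ A u`.
    let σ : (Fin 2 → ℤ) → (Fin 4 →₀ ℕ) := Function.invFun degA
    have hσ : ∀ u, degA (σ (degA u)) = degA u := fun u => Function.invFun_eq ⟨u, rfl⟩
    let Λ : MvPolynomial (Fin 4) ℂ → MvPolynomial (Fin 4) ℂ :=
      fun G => AddMonoidAlgebra.mapDomain σ (toricMap G)
    have key : ∀ G, G - Λ G ∈ toricIdeal matA := by
      intro G
      induction G using MvPolynomial.induction_on' with
      | monomial u a =>
        have h1 : Λ (monomial u a) = monomial (σ (degA u)) a := by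
          simp only [Λ, toricMap_monomial]
          exact AddMonoidAlgebra.mapDomain_single
        have h2 : monomial u a - monomial (σ (degA u)) a =
            C a * (monomial u 1 - monomial (σ (degA u)) 1) := by
          rw [mul_sub, C_mul_monomial, C_mul_monomial, mul_one]
        rw [h1, h2]
        exact Ideal.mul_mem_left _ _ (Ideal.subset_span ⟨u, _, (hσ u).symm, rfl⟩)
      | add p q hp hq =>
        have h1 : Λ (p + q) = Λ p + Λ q := by
          simp only [Λ, map_add]
          exact AddMonoidAlgebra.mapDomain_add _ _ _
        rw [h1, add_sub_add_comm]
        exact Ideal.add_mem _ hp hq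
    have h0 : Λ F = 0 := by
      simp only [Λ, RingHom.mem_ker.1 hF]
      exact AddMonoidAlgebra.mapDomain_zero _
    simpa [h0] using key F
  · rw [toricIdeal, Ideal.span_le]
    rintro _ ⟨u, v, h, rfl⟩
    change toricMap _ = 0
    rw [map_sub, toricMap_monomial, toricMap_monomial, sub_eq_zero]
    congr 1

lemma isPrime_toricIdeal : (toricIdeal matA).IsPrime := by
  rw [← ker_toricMap]
  exact RingHom.ker_isPrime _

lemma binomial_mem (u v : Fin 4 →₀ ℕ) (h : degA u = degA v) :
    monomial u (1 : ℂ) - monomial v 1 ∈ toricIdeal matA :=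
  Ideal.subset_span ⟨u, v, h, rfl⟩

/-- The coefficients of an element of `I_A` sum to zero over each fibre of `u ↦ A u`, so no
exponent is alone in its fibre. -/
lemma exists_ne_of_mem_toricIdeal {F : MvPolynomial (Fin 4) ℂ} (hF : F ∈ toricIdeal matA)
    {u : Fin 4 →₀ ℕ} (hu : u ∈ F.support) : ∃ v ∈ F.support, v ≠ u ∧ degA v = degA u := by
  by_contra! hcon
  rw [← ker_toricMap, RingHom.mem_ker] at hF
  apply mem_support_iff.1 hu
  have h1 : (toricMap F).coeff (degA u) = F.coeff u := by
    conv_lhs => rw [F.as_sum, map_sum]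
    simp only [toricMap_monomial]
    rw [AddMonoidAlgebra.coeff_sum, Finsupp.finsetSum_apply, Finset.sum_eq_single u]
    · rw [AddMonoidAlgebra.coeff_single, Finsupp.single_eq_same]
    · intro v hv hvu
      rw [AddMonoidAlgebra.coeff_single, Finsupp.single_eq_of_ne (hcon v hv hvu).symm]
    · intro h
      exact absurd hu h
  rw [← h1, hF]; rfl

end toric

/-! ### The initial ideal -/

section initial

/-- The exponent vector `(a, b, c, d)`. -/
def ex (a b c d : ℕ) : Fin 4 →₀ ℕ := Finsupp.equivFunOnFinite.symm ![a, b, c, d]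

@[simp] lemma ex_zero (a b c d : ℕ) : ex a b c d 0 = a := rfl
@[simp] lemma ex_one (a b c d : ℕ) : ex a b c d 1 = b := rfl
@[simp] lemma ex_two (a b c d : ℕ) : ex a b c d 2 = c := rfl
@[simp] lemma ex_three (a b c d : ℕ) : ex a b c d 3 = d := rfl

lemma ext_four {u v : Fin 4 →₀ ℕ} (h0 : u 0 = v 0) (h1 : u 1 = v 1) (h2 : u 2 = v 2)
    (h3 : u 3 = v 3) : u = v := by
  ext i; fin_cases i <;> assumption

lemma wt_le_iff (u v : Fin 4 →₀ ℕ) : wt (fun _ => 1) u ≤ wt (fun _ => 1) v ↔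
    u 0 + u 1 + u 2 + u 3 ≤ v 0 + v 1 + v 2 + v 3 := by
  simp only [wt, one_mul, Fin.sum_univ_four]
  exact_mod_cast Iff.rfl

lemma coeff_initialForm {n : ℕ} (L : Fin n → ℚ) (F : MvPolynomial (Fin n) ℂ) (u : Fin n →₀ ℕ)
    (h : (initialForm L F).coeff u ≠ 0) : u ∈ F.support ∧ ∀ v ∈ F.support, wt L v ≤ wt L u := by
  contrapose! h
  rw [initialForm, MvPolynomial.coeff_sum]
  refine Finset.sum_eq_zero fun v hv => ?_
  rw [Finset.mem_filter] at hv
  have hne : v ≠ u := by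
    rintro rfl
    obtain ⟨w, hw, hlt⟩ := h hv.1
    exact absurd (hv.2 w hw) (not_le.2 hlt)
  rw [coeff_monomial, if_neg hne]

/-- `u` has strictly smaller total degree than every other exponent `v` with `A v = A u`. -/
def IsStrictMin (u : Fin 4 →₀ ℕ) : Prop :=
  ∀ v, degA v = degA u → v 0 + v 1 + v 2 + v 3 ≤ u 0 + u 1 + u 2 + u 3 → v = u

lemma IsStrictMin.of_add {u w : Fin 4 →₀ ℕ} (h : IsStrictMin (w + u)) : IsStrictMin u := by
  intro v hv hle
  have := h (w + v) (by rw [map_add, map_add, hv])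
    (by simp only [Finsupp.add_apply]; omega)
  exact add_left_cancel this

/-- The initial ideal of the toric ideal with respect to total degree. -/
abbrev inA : Ideal (MvPolynomial (Fin 4) ℂ) := initialIdeal (fun _ => 1) (toricIdeal matA)

/-- A strict minimum `u` is never a leading exponent of an element of `I_A`; this extends from
initial forms to the ideal they generate because divisors of `∂^u` are strict minima too. -/
lemma coeff_eq_zero_of_mem_initialIdeal {g : MvPolynomial (Fin 4) ℂ} (hg : g ∈ inA)
    {u : Fin 4 →₀ ℕ} (hu : IsStrictMin u) : MvPolynomial.coeff u g = 0 := by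
  induction hg using Submodule.span_induction generalizing u with
  | mem g hg =>
    obtain ⟨F, hF, -, rfl⟩ := hg
    by_contra hne
    obtain ⟨hsupp, hmax⟩ := coeff_initialForm _ F u hne
    obtain ⟨v, hv, hvu, hdeg⟩ := exists_ne_of_mem_toricIdeal hF hsupp
    exact hvu (hu v hdeg ((wt_le_iff v u).1 (hmax v hv)))
  | zero => simp
  | add x y _ _ hx hy => rw [coeff_add, hx hu, hy hu, add_zero]
  | smul r x _ hx =>
    rw [smul_eq_mul, coeff_mul]
    refine Finset.sum_eq_zero fun w hw => ?_
    rw [Finset.HasAntidiagonal.mem_antidiagonal] at hw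
    rw [hx (IsStrictMin.of_add (hw ▸ hu)), mul_zero]

lemma monomial_mem_inA {u v : Fin 4 →₀ ℕ} (h : degA u = degA v)
    (hlt : v 0 + v 1 + v 2 + v 3 < u 0 + u 1 + u 2 + u 3) : monomial u (1 : ℂ) ∈ inA := by
  have hne : u ≠ v := by rintro rfl; exact lt_irrefl _ hlt
  set F : MvPolynomial (Fin 4) ℂ := monomial u 1 - monomial v 1 with hF
  have hu : MvPolynomial.coeff u F = 1 := by simp [hF, coeff_monomial, hne.symm]
  refine Ideal.subset_span ⟨F, binomial_mem u v h, fun h0 => by simp [h0] at hu, ?_⟩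
  have hsub : ∀ w ∈ F.support, w = u ∨ w = v := by
    intro w hw
    by_contra! hcon
    rw [mem_support_iff] at hw
    apply hw
    simp [hF, coeff_monomial, hcon.1.symm, hcon.2.symm]
  have hfil : (F.support.filter fun w => ∀ v ∈ F.support, wt (fun _ => 1) v ≤ wt (fun _ => 1) w)
      = {u} := by
    ext w
    rw [Finset.mem_filter, Finset.mem_singleton]
    constructor
    · rintro ⟨hw, hmax⟩
      rcases hsub w hw with rfl | rfl
      · rfl
      · have := (wt_le_iff _ _).1 (hmax u (by rw [mem_support_iff, hu]; exact one_ne_zero))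
        omega
    · rintro rfl
      refine ⟨by rw [mem_support_iff, hu]; exact one_ne_zero, fun x hx => (wt_le_iff _ _).2 ?_⟩
      rcases hsub x hx with rfl | rfl
      · rfl
      · exact hlt.le
  rw [initialForm, hfil, Finset.sum_singleton]
  exact (congrArg (monomial u) hu).symm

end initial

/-! ### Ideals generated by variables -/

section monomialPrimes

/-- The ideal generated by a set of variables is the kernel of the substitution that sets those
variables to zero. -/
lemma isPrime_span_X_image {σ : Type} [DecidableEq σ] (s : Set σ) :
    (Ideal.span (X '' s : Set (MvPolynomial σ ℂ))).IsPrime := by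
  classical
  let θ : MvPolynomial σ ℂ →ₐ[ℂ] MvPolynomial σ ℂ := aeval fun i => if i ∈ s then 0 else X i
  have hker : RingHom.ker θ = Ideal.span (X '' s) := by
    apply le_antisymm
    · intro F hF
      have h : (Ideal.Quotient.mkₐ ℂ (Ideal.span (X '' s))).comp θ =
          Ideal.Quotient.mkₐ ℂ (Ideal.span (X '' s)) := by
        apply algHom_ext
        intro i
        by_cases hi : i ∈ s
        · simp only [θ, AlgHom.comp_apply, aeval_X, if_pos hi, map_zero]
          exact (Ideal.Quotient.eq_zero_iff_mem.2 (Ideal.subset_span (Set.mem_image_of_mem X hi))).symm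
        · simp [θ, if_neg hi]
      have h2 := DFunLike.congr_fun h F
      rw [AlgHom.comp_apply, (RingHom.mem_ker.1 hF : θ F = 0), map_zero] at h2
      exact Ideal.Quotient.eq_zero_iff_mem.1 h2.symm
    · rw [Ideal.span_le]
      rintro _ ⟨i, hi, rfl⟩
      change θ (X i) = 0
      simp [θ, if_pos hi]
  rw [← hker]
  exact RingHom.ker_isPrime _

lemma mul_mem_of_mem_span_X {σ : Type} (s : Set σ) (J : Ideal (MvPolynomial σ ℂ))
    (f : MvPolynomial σ ℂ) (h : ∀ i ∈ s, X i * f ∈ J) :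
    ∀ a ∈ Ideal.span (X '' s : Set (MvPolynomial σ ℂ)), a * f ∈ J := by
  intro a ha
  induction ha using Submodule.span_induction with
  | mem a ha => obtain ⟨i, hi, rfl⟩ := ha; exact h i hi
  | zero => simp
  | add u v _ _ hu hv => rw [add_mul]; exact Ideal.add_mem _ hu hv
  | smul r u _ hu => rw [smul_eq_mul, mul_assoc]; exact Ideal.mul_mem_left _ _ hu

lemma X_mem_span_X_iff {σ : Type} (s : Set σ) (i : σ) :
    (X i : MvPolynomial σ ℂ) ∈ Ideal.span (X '' s : Set (MvPolynomial σ ℂ)) ↔ i ∈ s := by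
  classical
  refine ⟨fun h => ?_, fun h => Ideal.subset_span ⟨i, h, rfl⟩⟩
  rw [mem_ideal_span_X_image] at h
  obtain ⟨j, hj, hne⟩ := h (Finsupp.single i 1) (by simp [mem_support_iff])
  rw [Finsupp.single_apply_ne_zero] at hne
  exact hne.1 ▸ hj

lemma span_X_lt {σ : Type} {s t : Set σ} (h : s < t) :
    Ideal.span (X '' s : Set (MvPolynomial σ ℂ)) < Ideal.span (X '' t) := by
  obtain ⟨hle, i, hi, hni⟩ := Set.ssubset_iff_exists.1 h
  exact SetLike.lt_iff_le_and_exists.2 ⟨Ideal.span_mono (Set.image_mono hle), X i,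
    (X_mem_span_X_iff t i).2 hi, fun h' => hni ((X_mem_span_X_iff s i).1 h')⟩

end monomialPrimes

/-! ### The two quotient rings -/

section main

lemma X_mul_monomial_one (i : Fin 4) (u : Fin 4 →₀ ℕ) :
    (X i : MvPolynomial (Fin 4) ℂ) * monomial u 1 = monomial (Finsupp.single i 1 + u) 1 := by
  rw [X, monomial_mul, one_mul]

/-- The prime `(∂₁,∂₃,∂₄)` is the annihilator of `∂₁³∂₃` modulo `in(I_A)`, and lies strictly above
the prime `(∂₃,∂₄) ⊇ in(I_A)`. -/
lemma not_isCohenMacaulayRing_inA : ¬ IsCohenMacaulayRing (MvPolynomial (Fin 4) ℂ ⧸ inA) := by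
  have := isPrime_span_X_image ({2, 3} : Set (Fin 4))
  have := isPrime_span_X_image ({0, 2, 3} : Set (Fin 4))
  refine not_isCohenMacaulayRing_of_embedded inA (Ideal.span (X '' {2, 3}))
    (Ideal.span (X '' {0, 2, 3})) ?_ (span_X_lt ?_) (monomial (ex 3 0 1 0) 1) ?_ ?_
  -- Monomials in `∂₁, ∂₂` alone are strict minima, so `in(I_A) ⊆ (∂₃,∂₄)`.
  · intro g hg
    rw [mem_ideal_span_X_image]
    intro m hm
    by_contra! hcon
    have h2 := hcon 2 (by simp)
    have h3 := hcon 3 (by simp)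
    refine mem_support_iff.1 hm (coeff_eq_zero_of_mem_initialIdeal hg fun v hv hle => ?_)
    rw [degA_eq_iff] at hv
    apply ext_four <;> omega
  · refine Set.ssubset_iff_exists.2 ⟨by intro i; simp; tauto, 0, by simp, by simp⟩
  -- Any `s ∉ (∂₁,∂₃,∂₄)` contains a power of `∂₂`, and `∂₁³ ∂₂^b ∂₃` is a strict minimum.
  · intro s hs hmem
    rw [mem_ideal_span_X_image] at hs
    push Not at hs
    obtain ⟨m, hm, hz⟩ := hs
    have h0 := hz 0 (by simp)
    have h2 := hz 2 (by simp)
    have h3 := hz 3 (by simp)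
    have hmin : IsStrictMin (m + ex 3 0 1 0) := by
      intro v hv hle
      rw [degA_eq_iff] at hv
      simp only [Finsupp.add_apply, ex_zero, ex_one, ex_two, ex_three] at hv hle
      have h3' : v 3 = 0 := by omega
      apply ext_four <;> simp only [Finsupp.add_apply, ex_zero, ex_one, ex_two, ex_three] <;> omega
    have := coeff_eq_zero_of_mem_initialIdeal hmem hmin
    rw [coeff_mul_monomial, mul_one] at this
    exact mem_support_iff.1 hm this
  -- `∂₁⁴∂₃ - ∂₂²`, `∂₁³∂₃² - ∂₁∂₂∂₄` and `∂₁³∂₃∂₄ - ∂₁∂₂∂₃²` lie in `I_A`.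
  · apply mul_mem_of_mem_span_X
    rintro i (rfl | rfl | rfl)
    · rw [X_mul_monomial_one]
      exact monomial_mem_inA (v := ex 0 2 0 0) (by rw [degA_eq_iff]; simp) (by simp)
    · rw [X_mul_monomial_one]
      exact monomial_mem_inA (v := ex 1 1 0 1) (by rw [degA_eq_iff]; simp) (by simp)
    · rw [X_mul_monomial_one]
      exact monomial_mem_inA (v := ex 1 1 2 0) (by rw [degA_eq_iff]; simp) (by simp)

/-- `∂^u` is divisible by `∂₃` modulo `I_A` if some exponent `v` in its fibre involves `∂₃`. -/
lemma monomial_mem_toricIdeal_sup {u v : Fin 4 →₀ ℕ} (h : degA u = degA v) (hv : v 2 ≠ 0) :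
    monomial u (1 : ℂ) ∈ toricIdeal matA ⊔ Ideal.span {X 2} := by
  rw [← sub_add_cancel (monomial u (1 : ℂ)) (monomial v 1)]
  refine Ideal.add_mem _ (Ideal.mem_sup_left (binomial_mem u v h)) (Ideal.mem_sup_right ?_)
  rw [Ideal.mem_span_singleton, X_dvd_monomial]
  exact Or.inr hv

/-- An exponent that is alone in its fibre occurs in no element of `I_A`. -/
lemma coeff_eq_zero_of_mem_toricIdeal {F : MvPolynomial (Fin 4) ℂ} (hF : F ∈ toricIdeal matA)
    {u : Fin 4 →₀ ℕ} (hu : ∀ v, degA v = degA u → v = u) : MvPolynomial.coeff u F = 0 := by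
  by_contra hne
  obtain ⟨v, -, hvu, hdeg⟩ := exists_ne_of_mem_toricIdeal hF (mem_support_iff.2 hne)
  exact hvu (hu v hdeg)

/-- The element `∂₁∂₄` is a socle element modulo `∂₃` at the origin. -/
lemma not_isCohenMacaulayRing_toric :
    ¬ IsCohenMacaulayRing (MvPolynomial (Fin 4) ℂ ⧸ toricIdeal matA) := by
  have := isPrime_span_X_image ({1, 2, 3} : Set (Fin 4))
  have := isPrime_span_X_image (Set.univ : Set (Fin 4))
  have := isPrime_toricIdeal
  have hX : (X 2 : MvPolynomial (Fin 4) ℂ) ∉ toricIdeal matA := by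
    intro h
    have := coeff_eq_zero_of_mem_toricIdeal h (u := Finsupp.single 2 1) (fun v hv => by
      rw [degA_eq_iff] at hv
      simp at hv
      apply ext_four <;> simp <;> omega)
    simp at this
  refine not_isCohenMacaulayRing_of_socle (toricIdeal matA) (Ideal.span (X '' {1, 2, 3}))
    (Ideal.span (X '' Set.univ)) ?_ (span_X_lt ?_) (X 2) (monomial (ex 1 0 0 1) 1) hX ?_ ?_
  · refine SetLike.lt_iff_le_and_exists.2 ⟨?_, X 2, (X_mem_span_X_iff _ _).2 (by simp), hX⟩
    -- Powers of `∂₁` are alone in their fibres, so `I_A ⊆ (∂₂,∂₃,∂₄)`.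
    intro g hg
    rw [mem_ideal_span_X_image]
    intro m hm
    by_contra! hcon
    have h1 := hcon 1 (by simp)
    have h2 := hcon 2 (by simp)
    have h3 := hcon 3 (by simp)
    refine mem_support_iff.1 hm (coeff_eq_zero_of_mem_toricIdeal hg fun v hv => ?_)
    rw [degA_eq_iff] at hv
    apply ext_four <;> omega
  · exact Set.ssubset_iff_exists.2 ⟨Set.subset_univ _, 0, by simp, by simp⟩
  -- `∂₁²∂₄ ≡ ∂₂∂₃`, `∂₁∂₂∂₄ ≡ ∂₁³∂₃²` and `∂₁∂₄² ≡ ∂₁∂₃³` modulo `I_A`.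
  · apply mul_mem_of_mem_span_X
    intro i _
    rw [X_mul_monomial_one]
    fin_cases i
    · exact monomial_mem_toricIdeal_sup (v := ex 0 1 1 0) (by rw [degA_eq_iff]; simp) (by simp)
    · exact monomial_mem_toricIdeal_sup (v := ex 3 0 2 0) (by rw [degA_eq_iff]; simp) (by simp)
    · exact monomial_mem_toricIdeal_sup (v := ex 1 0 1 1) (by rw [degA_eq_iff]; simp) (by simp)
    · exact monomial_mem_toricIdeal_sup (v := ex 1 0 3 0) (by rw [degA_eq_iff]; simp) (by simp)
  -- If `s` has nonzero constant term, `∂₁∂₄` occurs in `s ∂₁∂₄`. It is alone in its fibre and not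
  -- divisible by `∂₃`, so it occurs in no element of `I_A + (∂₃)`.
  · intro s hs hmem
    rw [mem_ideal_span_X_image] at hs
    push Not at hs
    obtain ⟨m, hm, hz⟩ := hs
    obtain rfl : m = 0 := Finsupp.ext fun i => hz i (Set.mem_univ i)
    obtain ⟨F, hF, z, hzm, e⟩ := Submodule.mem_sup.1 hmem
    obtain ⟨r, rfl⟩ := Ideal.mem_span_singleton.1 hzm
    have h1 := coeff_eq_zero_of_mem_toricIdeal hF (u := ex 1 0 0 1) (fun v hv => by
      rw [degA_eq_iff] at hv
      simp at hv
      have h3 : v 3 = 0 ∨ v 3 = 1 := by omega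
      rcases h3 with h3 | h3
      · omega
      · apply ext_four <;> simp <;> omega)
    have h2 := congrArg (MvPolynomial.coeff (0 + ex 1 0 0 1)) e
    rw [coeff_mul_monomial, mul_one, zero_add, coeff_add, h1, coeff_X_mul', if_neg (by simp),
      add_zero] at h2
    exact mem_support_iff.1 hm h2.symm

end main

/-- Row 3 of the table in Example 7.6 (columns `(0,1),(1,2),(2,0),(3,0)`): neither `ℂ[∂]/I_A` nor `ℂ[∂]/in(I_A)` is Cohen–Macaulay. -/
theorem stmt12 :
    ¬ IsCohenMacaulayRing (MvPolynomial (Fin 4) ℂ ⧸ toricIdeal (!![0, 1, 2, 3; 1, 2, 0, 0] : Matrix (Fin 2) (Fin 4) ℤ)) ∧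
    ¬ IsCohenMacaulayRing (MvPolynomial (Fin 4) ℂ ⧸ initialIdeal (fun _ => 1) (toricIdeal (!![0, 1, 2, 3; 1, 2, 0, 0] : Matrix (Fin 2) (Fin 4) ℤ))) := by
  exact ⟨not_isCohenMacaulayRing_toric, not_isCohenMacaulayRing_inA⟩

end
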